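/- For the elephant random walk with memory parameter p ∈ [0, 1) on a Cayley graph that is the d-regular tree T_d (d ≥ 3), the martingale M_n = ∑_{k=1}^n Y_k (where Y_{k} = Δ_{k} − Δ_{k−1} − G_{k−1} and G_k = E[Δ_{k+1} − Δ_k | F_k]) has predictable quadratic variation ⟨M⟩_n = ∑_{k=1}^n E[Y_k² | F_{k−1}] = n − ∑_{k=0}^{n−1} G_k², and ⟨M⟩_n / n → 4(d − 1)/d² almost surely as n → ∞. -/

import Mathlib

open MeasureTheory ProbabilityTheory Filter

noncomputable section

/-- The Cayley graph of a group with respect to a finite set of generators. -/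
def cayleyGraph {G : Type*} [Group G] (S : Finset G) : SimpleGraph G where
  Adj x y := x ≠ y ∧ (y * x⁻¹ ∈ S ∨ x * y⁻¹ ∈ S)
  symm := by
    constructor
    rintro x y ⟨h1, h2⟩
    refine ⟨h1.symm, ?_⟩
    rcases h2 with h | h
    · exact Or.inr h
    · exact Or.inl h
  loopless := ⟨fun x h => h.1 rfl⟩

/-- The elephant random walk (ERW) with memory parameter `p` on the Cayley graph of a
group `G` with respect to a symmetric generating set `S` of cardinality `d`, not
containing the identity, whose Cayley graph is a tree (hence the `d`-regular tree
`T_d`).  The steps are `g 1, g 2, …` (the value of `g 0` is irrelevant).  The law of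
the process is characterised by: `g 1` is uniform on `S`, and, conditionally on the
first `n` steps being `s 1, …, s n`, the next step `g (n+1)` equals `a ∈ S` with
probability `p * N/n + ((1-p)/(d-1)) * (n-N)/n`, where `N = #{1 ≤ k ≤ n : s k = a}`;
this is precisely the probability that the walker, recalling a uniform past epoch
`D ∈ {1, …, n}`, repeats `g D` with probability `p` and takes any given other step
with probability `(1-p)/(d-1)`. -/
structure ERW (G : Type*) [Group G] [DecidableEq G] (d : ℕ) (p : ℝ)
    (Ω : Type*) [MeasurableSpace Ω] (P : Measure Ω) where
  S : Finset G
  card_S : S.card = d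
  symm_S : ∀ s ∈ S, s⁻¹ ∈ S
  one_not_mem : (1 : G) ∉ S
  tree : (cayleyGraph S).IsTree
  g : ℕ → Ω → G
  meas_g : ∀ n a, MeasurableSet {ω | g n ω = a}
  mem_S : ∀ n, 1 ≤ n → ∀ ω, g n ω ∈ S
  init : ∀ a ∈ S, (P {ω | g 1 ω = a}).toReal = 1 / d
  update : ∀ n, 1 ≤ n → ∀ s : ℕ → G, ∀ a ∈ S,
    (P ({ω | ∀ k ∈ Finset.Icc 1 n, g k ω = s k} ∩ {ω | g (n + 1) ω = a})).toReal
      = (p * ((((Finset.Icc 1 n).filter fun k => s k = a).card : ℝ) / n)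
          + (1 - p) / ((d : ℝ) - 1)
            * (((n : ℝ) - (((Finset.Icc 1 n).filter fun k => s k = a).card : ℝ)) / n))
        * (P {ω | ∀ k ∈ Finset.Icc 1 n, g k ω = s k}).toReal

namespace ERW

variable {G : Type*} [Group G] [DecidableEq G] {d : ℕ} {p : ℝ}
  {Ω : Type*} [MeasurableSpace Ω] {P : Measure Ω}

/-- The position `w n = g n ⋯ g 1` of the walk at time `n`. -/
def pos (E : ERW G d p Ω P) : ℕ → Ω → G
  | 0 => fun _ => 1
  | n + 1 => fun ω => E.g (n + 1) ω * E.pos n ω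

/-- `Δ n`: the (word-metric) distance of the walker from the root at time `n`. -/
def dist (E : ERW G d p Ω P) (n : ℕ) (ω : Ω) : ℕ :=
  (cayleyGraph E.S).dist 1 (E.pos n ω)

/-- `N n a`: the number of `a`-steps taken by time `n`. -/
def count (E : ERW G d p Ω P) (a : G) (n : ℕ) (ω : Ω) : ℕ :=
  ((Finset.Icc 1 n).filter fun k => E.g k ω = a).card

/-- `γ n`: the unique step decreasing the distance to the root by 1
(a junk value if the walker is at the root). -/
def gammaStep (E : ERW G d p Ω P) (n : ℕ) (ω : Ω) : G :=
  @Classical.epsilon G ⟨1⟩ fun s =>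
    s ∈ E.S ∧ (cayleyGraph E.S).dist 1 (s * E.pos n ω) + 1 = E.dist n ω

/-- `ℓ n = N n (γ n)` if the walker is away from the root, and `0` otherwise. -/
def ell (E : ERW G d p Ω P) (n : ℕ) (ω : Ω) : ℕ :=
  if E.pos n ω = 1 then 0 else E.count (E.gammaStep n ω) n ω

/-- `Ξ n = (1/n) ∑_{k=0}^{n-1} (ℓ k / k - 1(Δ k > 0)/d)` (with the convention
`ℓ 0 / 0 = 0`, automatic since division by zero yields zero). -/
def Xi (E : ERW G d p Ω P) (n : ℕ) (ω : Ω) : ℝ :=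
  (1 / n) * ∑ k ∈ Finset.range n,
    ((E.ell k ω : ℝ) / k - (if 0 < E.dist k ω then 1 else 0) / d)

/-- The natural filtration `F n` generated by the steps up to time `n`. -/
def filt (E : ERW G d p Ω P) (n : ℕ) : MeasurableSpace Ω :=
  ⨆ k ∈ Finset.Icc 1 n, MeasurableSpace.comap (E.g k) ⊤

/-- `G n = E[Δ (n+1) - Δ n | F n]`. -/
def drift (E : ERW G d p Ω P) (n : ℕ) : Ω → ℝ :=
  P[fun ω => ((E.dist (n + 1) ω : ℝ) - (E.dist n ω : ℝ)) | E.filt n]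

/-- The martingale differences `Y k = Δ k - Δ (k-1) - G (k-1)`. -/
def mdiff (E : ERW G d p Ω P) (k : ℕ) (ω : Ω) : ℝ :=
  (E.dist k ω : ℝ) - (E.dist (k - 1) ω : ℝ) - E.drift (k - 1) ω

/-- The martingale `M n = ∑_{k=1}^n Y k`. -/
def mart (E : ERW G d p Ω P) (n : ℕ) (ω : Ω) : ℝ :=
  ∑ k ∈ Finset.Icc 1 n, E.mdiff k ω

end ERW

/-- The rate `r n`: `√n` in the subcritical regime `p < p_d = (d+1)/(2d)`,
`√(n / log n)` in the critical regime `p = p_d`, and `n ^ (d(1-p)/(d-1))` in the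
supercritical regime `p > p_d`. -/
def rate (p : ℝ) (d : ℕ) (n : ℕ) : ℝ :=
  if p < ((d : ℝ) + 1) / (2 * d) then Real.sqrt n
  else if p = ((d : ℝ) + 1) / (2 * d) then Real.sqrt ((n : ℝ) / Real.log n)
  else (n : ℝ) ^ ((d : ℝ) * (1 - p) / ((d : ℝ) - 1))



/-- Interpolation along squares: bounded increments plus convergence along squares. -/
lemma tendsto_div_of_squares (m : ℕ → ℝ) (C : ℝ) (hinc : ∀ k, |m (k + 1) - m k| ≤ C)
    (hsq : Tendsto (fun k : ℕ => m (k ^ 2) / (k : ℝ) ^ 2) atTop (nhds 0)) :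
    Tendsto (fun n : ℕ => m n / n) atTop (nhds 0) := by
  have hC : 0 ≤ C := (abs_nonneg _).trans (hinc 0)
  have hlip : ∀ a j : ℕ, |m (a + j) - m a| ≤ C * j := by
    intro a j
    induction j with
    | zero => simp
    | succ j ih =>
      have h1 := hinc (a + j)
      have : m (a + (j + 1)) - m a = (m (a + j + 1) - m (a + j)) + (m (a + j) - m a) := by
        rw [← add_assoc]; ring
      rw [this]
      push_cast
      calc _ ≤ _ := abs_add_le _ _
        _ ≤ C + C * j := add_le_add h1 ih
        _ = _ := by ring
  have hs : Tendsto Nat.sqrt atTop atTop := by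
    refine tendsto_atTop_atTop.2 fun b => ⟨b * b, fun a ha => ?_⟩
    exact Nat.le_sqrt.2 ha
  have hb : Tendsto (fun k : ℕ => |m (k ^ 2) / (k : ℝ) ^ 2| + 2 * C / k) atTop (nhds 0) := by
    have h2 : Tendsto (fun k : ℕ => 2 * C / (k : ℝ)) atTop (nhds 0) :=
      tendsto_const_div_atTop_nhds_zero_nat _
    simpa using hsq.abs.add h2
  refine squeeze_zero_norm' ?_ (hb.comp hs)
  filter_upwards [eventually_ge_atTop 1] with n hn
  have hk : 0 < Nat.sqrt n := Nat.sqrt_pos.2 hn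
  simp only [Function.comp]
  have hk1 : (Nat.sqrt n) ^ 2 ≤ n := by rw [pow_two]; exact Nat.sqrt_le n
  have hk2 : n ≤ (Nat.sqrt n) ^ 2 + 2 * Nat.sqrt n := by
    have := Nat.sqrt_le_add n
    rw [pow_two]; omega
  generalize Nat.sqrt n = k at hk hk1 hk2 ⊢
  obtain ⟨j, rfl⟩ := Nat.exists_eq_add_of_le hk1
  have hj : j ≤ 2 * k := by omega
  have hjR : (j : ℝ) ≤ 2 * k := by exact_mod_cast hj
  have hkR : (0 : ℝ) < k := by exact_mod_cast hk
  have h3 := hlip (k ^ 2) j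
  have h4 : |m (k ^ 2 + j)| ≤ |m (k ^ 2)| + C * (2 * k) := by
    have : m (k ^ 2 + j) = m (k ^ 2) + (m (k ^ 2 + j) - m (k ^ 2)) := by ring
    rw [this]
    refine (abs_add_le _ _).trans ?_
    have := mul_le_mul_of_nonneg_left hjR hC
    linarith
  rw [Real.norm_eq_abs, abs_div, abs_div]
  have h5 : |((k ^ 2 + j : ℕ) : ℝ)| = (k : ℝ) ^ 2 + j := by
    rw [abs_of_nonneg (by positivity)]; push_cast; ring
  rw [h5, abs_of_nonneg (by positivity : (0 : ℝ) ≤ (k : ℝ) ^ 2)]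
  calc |m (k ^ 2 + j)| / ((k : ℝ) ^ 2 + j) ≤ (|m (k ^ 2)| + C * (2 * k)) / (k : ℝ) ^ 2 := by
        apply div_le_div₀ (by positivity) h4 (by positivity)
        have : (0 : ℝ) ≤ j := by positivity
        linarith
    _ = _ := by field_simp

/-- Strong law for bounded martingale differences `X k - E[X k | F k]`. -/
lemma slln_mart {Ω : Type*} {mΩ : MeasurableSpace Ω} {P : Measure Ω} [IsProbabilityMeasure P]
    (F : ℕ → MeasurableSpace Ω) (hF : ∀ n, F n ≤ mΩ) (hmono : Monotone F)
    (X : ℕ → Ω → ℝ) (hX : ∀ k, StronglyMeasurable[F (k + 1)] (X k))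
    (hb : ∀ k ω, |X k ω| ≤ 1) :
    ∀ᵐ ω ∂P, Tendsto (fun n : ℕ => (∑ k ∈ Finset.range n, (X k ω - (P[X k | F k]) ω)) / n)
      atTop (nhds 0) := by
  set ξ : ℕ → Ω → ℝ := fun k ω => X k ω - (P[X k | F k]) ω with hξ
  set m : ℕ → Ω → ℝ := fun n ω => ∑ k ∈ Finset.range n, ξ k ω with hm
  have hbd : ∀ᵐ ω ∂P, ∀ k, |ξ k ω| ≤ 2 := by
    rw [ae_all_iff]
    intro k
    have := ae_bdd_abs_condExp_of_ae_bdd_abs (m := F k) (μ := P) (R := 1) (f := X k)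
      (Eventually.of_forall (fun ω => hb k ω))
    filter_upwards [this] with ω h
    have h1 := hb k ω
    simp only [hξ]
    rw [abs_le] at *
    constructor <;> linarith [h.1, h.2, h1.1, h1.2]
  have hξm : ∀ k, StronglyMeasurable[F (k + 1)] (ξ k) := fun k =>
    (hX k).sub (stronglyMeasurable_condExp.mono (hmono (Nat.le_succ k)))
  have hmm : ∀ n, StronglyMeasurable[F n] (m n) := by
    intro n
    have : m n = ∑ k ∈ Finset.range n, ξ k := by ext ω; simp [hm]
    rw [this]
    refine Finset.stronglyMeasurable_sum _ fun k hk => ?_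
    exact (hξm k).mono (hmono (Finset.mem_range.1 hk))
  have hXi : ∀ k, Integrable (X k) P := fun k =>
    Integrable.of_bound ((hX k).mono (hF _)).aestronglyMeasurable 1
      (Eventually.of_forall fun ω => by simpa using hb k ω)
  have hξi : ∀ k, Integrable (ξ k) P := fun k => (hXi k).sub integrable_condExp
  have hmb : ∀ n, ∀ᵐ ω ∂P, |m n ω| ≤ 2 * n := by
    intro n
    filter_upwards [hbd] with ω h
    calc |m n ω| ≤ ∑ k ∈ Finset.range n, |ξ k ω| := Finset.abs_sum_le_sum_abs _ _
      _ ≤ ∑ k ∈ Finset.range n, 2 := Finset.sum_le_sum fun k _ => h k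
      _ = 2 * n := by simp [mul_comm]
  have hξ0 : ∀ k, P[ξ k | F k] =ᵐ[P] 0 := by
    intro k
    have h1 : P[X k - P[X k | F k] | F k] =ᵐ[P] P[X k | F k] - P[P[X k | F k] | F k] :=
      condExp_sub (hXi k) integrable_condExp (F k)
    have h2 : P[P[X k | F k] | F k] = P[X k | F k] :=
      condExp_of_stronglyMeasurable (hF k) stronglyMeasurable_condExp integrable_condExp
    rw [h2, sub_self] at h1
    exact h1
  have hmξ : ∀ n, Integrable (m n * ξ n) P := fun n =>
    (hξi n).bdd_mul ((hmm n).mono (hF n)).aestronglyMeasurable (c := 2 * n) (hmb n)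
  have horth : ∀ n, ∫ ω, m n ω * ξ n ω ∂P = 0 := by
    intro n
    have h1 : P[m n * ξ n | F n] =ᵐ[P] m n * P[ξ n | F n] :=
      condExp_mul_of_stronglyMeasurable_left (hmm n) (hmξ n) (hξi n)
    have h2 : P[m n * ξ n | F n] =ᵐ[P] 0 := by
      filter_upwards [h1, hξ0 n] with ω h3 h4
      rw [h3]; simp [h4]
    have h3 := integral_condExp (hF n) (μ := P) (f := m n * ξ n)
    rw [integral_congr_ae h2] at h3
    simpa using h3.symm
  have hm2i : ∀ n, Integrable (fun ω => (m n ω) ^ 2) P := fun n =>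
    Integrable.of_bound (((hmm n).mono (hF n)).aestronglyMeasurable.pow 2) ((2 * n) ^ 2) (by
      filter_upwards [hmb n] with ω h
      rw [Real.norm_eq_abs, abs_pow]
      exact pow_le_pow_left₀ (abs_nonneg _) h 2)
  have hξ2i : ∀ n, Integrable (fun ω => (ξ n ω) ^ 2) P := fun n =>
    Integrable.of_bound (((hξm n).mono (hF _)).aestronglyMeasurable.pow 2) (2 ^ 2) (by
      filter_upwards [hbd] with ω h
      rw [Real.norm_eq_abs, abs_pow]
      exact pow_le_pow_left₀ (abs_nonneg _) (h n) 2)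
  have hvar : ∀ n : ℕ, ∫ ω, (m n ω) ^ 2 ∂P ≤ 4 * n := by
    intro n
    induction n with
    | zero => simp [hm]
    | succ n ih =>
      have h1 : (fun ω => (m (n + 1) ω) ^ 2)
          = fun ω => ((m n ω) ^ 2 + 2 * (m n ω * ξ n ω)) + (ξ n ω) ^ 2 := by
        ext ω
        have : m (n + 1) ω = m n ω + ξ n ω := Finset.sum_range_succ _ _
        rw [this]; ring
      have hi : Integrable (fun ω => 2 * (m n ω * ξ n ω)) P := (hmξ n).const_mul 2
      have h2 : ∫ ω, (ξ n ω) ^ 2 ∂P ≤ 4 := by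
        have : ∫ ω, (ξ n ω) ^ 2 ∂P ≤ ∫ ω, (4 : ℝ) ∂P := by
          refine integral_mono_ae (hξ2i n) (integrable_const _) ?_
          filter_upwards [hbd] with ω h
          have := abs_le.1 (h n)
          show (ξ n ω) ^ 2 ≤ 4
          nlinarith [this.1, this.2]
        simpa using this
      rw [h1, integral_add (f := fun ω => (m n ω) ^ 2 + 2 * (m n ω * ξ n ω)) ((hm2i n).add hi) (hξ2i n), integral_add (hm2i n) hi,
        integral_const_mul, horth n]
      push_cast
      linarith
  -- convergence along squares
  have hsq : ∀ᵐ ω ∂P, Tendsto (fun k : ℕ => m (k ^ 2) ω / (k : ℝ) ^ 2) atTop (nhds 0) := by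
    set f : ℕ → Ω → ENNReal := fun k ω =>
      ENNReal.ofReal ((m (k ^ 2) ω / (k : ℝ) ^ 2) ^ 2) with hf
    have hmeas : ∀ k, AEMeasurable (f k) P := fun k =>
      ((((hmm (k ^ 2)).mono (hF _)).measurable.div_const _).pow_const 2).ennreal_ofReal.aemeasurable
    have hint : ∀ k, ∫⁻ ω, f k ω ∂P ≤ ENNReal.ofReal (4 / (k : ℝ) ^ 2) := by
      intro k
      have e : (fun ω => (m (k ^ 2) ω / (k : ℝ) ^ 2) ^ 2)
          = fun ω => (m (k ^ 2) ω) ^ 2 / ((k : ℝ) ^ 2) ^ 2 := by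
        ext ω; rw [div_pow]
      have hi : Integrable (fun ω => (m (k ^ 2) ω / (k : ℝ) ^ 2) ^ 2) P := by
        rw [e]; exact (hm2i _).div_const _
      rw [← ofReal_integral_eq_lintegral_ofReal hi (Eventually.of_forall fun ω => sq_nonneg _)]
      apply ENNReal.ofReal_le_ofReal
      rw [e, integral_div]
      rcases Nat.eq_zero_or_pos k with rfl | hk
      · simp
      have hkR : (0 : ℝ) < k := by exact_mod_cast hk
      rw [div_le_div_iff₀ (by positivity) (by positivity)]
      have := hvar (k ^ 2)
      push_cast at this
      calc _ ≤ (4 * (k : ℝ) ^ 2) * (k : ℝ) ^ 2 :=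
            mul_le_mul_of_nonneg_right this (by positivity)
        _ = _ := by ring
    have hsum : Summable (fun k : ℕ => 4 / (k : ℝ) ^ 2) := by
      have := (Real.summable_one_div_nat_pow (p := 2)).2 (by norm_num)
      simpa [div_eq_mul_inv] using this.mul_left 4
    have htot : ∫⁻ ω, ∑' k, f k ω ∂P ≠ ⊤ := by
      rw [lintegral_tsum hmeas]
      refine ne_top_of_le_ne_top ?_ (ENNReal.tsum_le_tsum hint)
      rw [← ENNReal.ofReal_tsum_of_nonneg (fun k => by positivity) hsum]
      exact ENNReal.ofReal_ne_top
    filter_upwards [ae_lt_top' (AEMeasurable.tsum hmeas) htot] with ω hω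
    have h1 := ENNReal.tendsto_atTop_zero_of_tsum_ne_top hω.ne
    have h2 := (ENNReal.tendsto_toReal ENNReal.zero_ne_top).comp h1
    have h3 : Tendsto (fun k : ℕ => (m (k ^ 2) ω / (k : ℝ) ^ 2) ^ 2) atTop (nhds 0) := by
      refine h2.congr fun k => ?_
      simp only [Function.comp, hf]
      exact ENNReal.toReal_ofReal (sq_nonneg _)
    have h4 := h3.sqrt
    simp only [Real.sqrt_sq_eq_abs, Real.sqrt_zero] at h4
    exact (tendsto_zero_iff_abs_tendsto_zero _).2 h4
  filter_upwards [hbd, hsq] with ω h1 h2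
  refine tendsto_div_of_squares (fun n => m n ω) 2 (fun k => ?_) h2
  have : m (k + 1) ω - m k ω = ξ k ω := by
    simp only [hm, Finset.sum_range_succ]; ring
  rw [this]
  exact h1 k

/-- Deterministic urn recursion. -/
lemma urn_tendsto (N q : ℕ → ℝ) (α c : ℝ) (hα : |α| < 1)
    (hN : ∀ n, 0 ≤ N n ∧ N n ≤ n)
    (hq : ∀ n, 1 ≤ n → q n - c = α * (N n / n - c))
    (hs : Tendsto (fun n : ℕ => (N n - ∑ k ∈ Finset.range n, q k) / n) atTop (nhds 0)) :
    Tendsto (fun n : ℕ => N n / n) atTop (nhds c) := by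
  set z : ℕ → ℝ := fun n => N n / n - c with hz
  have hzb : ∀ n, |z n| ≤ 1 + |c| := by
    intro n
    have h0 : 0 ≤ N n / n := div_nonneg (hN n).1 (by positivity)
    have h1 : N n / n ≤ 1 := div_le_one_of_le₀ (hN n).2 (by positivity)
    calc |z n| ≤ |N n / n| + |c| := abs_sub _ _
      _ ≤ 1 + |c| := by rw [abs_of_nonneg h0]; linarith
  -- iterate: if eventually |z| ≤ L then eventually |z| ≤ |α| L + ε
  have step : ∀ L, 0 ≤ L → (∀ᶠ n in atTop, |z n| ≤ L) → ∀ ε > 0,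
      ∀ᶠ n in atTop, |z n| ≤ |α| * L + ε := by
    intro L hL hev ε hε
    set u : ℕ → ℝ := fun k => max (|q k - c|) (|α| * L) with hu
    have hut : Tendsto u atTop (nhds (|α| * L)) := by
      refine tendsto_const_nhds.congr' ?_
      filter_upwards [hev, eventually_ge_atTop 1] with k hk hk1
      rw [hu]
      simp only
      rw [hq k hk1, abs_mul, max_eq_right]
      exact mul_le_mul_of_nonneg_left hk (abs_nonneg _)
    have h1 := hut.cesaro.add hs.abs
    rw [abs_zero, add_zero] at h1
    filter_upwards [h1.eventually (gt_mem_nhds (show |α| * L < |α| * L + ε by linarith)),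
      eventually_ge_atTop 1] with n hn hn1
    refine le_trans ?_ hn.le
    have hnR : (0 : ℝ) < n := by exact_mod_cast hn1
    have e : z n = (n : ℝ)⁻¹ * ∑ k ∈ Finset.range n, (q k - c)
        + (N n - ∑ k ∈ Finset.range n, q k) / n := by
      rw [Finset.sum_sub_distrib]
      simp only [hz, Finset.sum_const, Finset.card_range, nsmul_eq_mul]
      field_simp
      ring
    rw [e]
    refine (abs_add_le _ _).trans ?_
    gcongr
    rw [abs_mul, abs_of_nonneg (by positivity : (0 : ℝ) ≤ (n : ℝ)⁻¹)]
    gcongr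
    refine (Finset.abs_sum_le_sum_abs _ _).trans (Finset.sum_le_sum fun k _ => le_max_left _ _)
  have hα' := abs_nonneg α
  have iter : ∀ j : ℕ, ∀ᶠ n in atTop, |z n| ≤ ((1 + |α|) / 2) ^ j * (1 + |c|) := by
    intro j
    induction j with
    | zero => exact Eventually.of_forall fun n => by simpa using hzb n
    | succ j ih =>
      have hpos : 0 < ((1 + |α|) / 2) ^ j * (1 + |c|) := by positivity
      have := step _ hpos.le ih ((1 - |α|) / 2 * (((1 + |α|) / 2) ^ j * (1 + |c|)))
        (mul_pos (by linarith) hpos)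
      filter_upwards [this] with n hn
      refine hn.trans (le_of_eq ?_)
      rw [pow_succ]; ring
  have hz0 : Tendsto z atTop (nhds 0) := by
    rw [Metric.tendsto_atTop']
    intro ε hε
    have h1 : Tendsto (fun j : ℕ => ((1 + |α|) / 2) ^ j * (1 + |c|)) atTop (nhds 0) := by
      simpa using (tendsto_pow_atTop_nhds_zero_of_lt_one (r := (1 + |α|) / 2)
        (by positivity) (by linarith)).mul_const (1 + |c|)
    obtain ⟨j, hj⟩ := (h1.eventually (gt_mem_nhds hε)).exists
    obtain ⟨n0, hn0⟩ := eventually_atTop.1 (iter j)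
    refine ⟨n0, fun n hn => ?_⟩
    rw [Real.dist_eq, sub_zero]
    exact (hn0 n hn.le).trans_lt hj
  simpa [hz] using hz0.add_const c

namespace ERW

section treefacts

variable {G : Type*} [Group G] [DecidableEq G] {d : ℕ} {p : ℝ}
  {Ω : Type*} [MeasurableSpace Ω] {P : Measure Ω}

lemma adj_mul (E : ERW G d p Ω P) {a : G} (ha : a ∈ E.S) (w : G) :
    (cayleyGraph E.S).Adj w (a * w) := by
  refine ⟨fun h => ?_, Or.inl (by simpa using ha)⟩
  have : a = 1 := by simpa using h.symm
  exact E.one_not_mem (this ▸ ha)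

/-- the signed change of distance when applying the step `a` at `w`. -/
def sgn (E : ERW G d p Ω P) (a w : G) : ℝ :=
  ((cayleyGraph E.S).dist 1 (a * w) : ℝ) - ((cayleyGraph E.S).dist 1 w : ℝ)

lemma sgn_cases (E : ERW G d p Ω P) {a : G} (ha : a ∈ E.S) (w : G) :
    E.sgn a w = 1 ∨ E.sgn a w = -1 := by
  rcases E.tree.dist_eq_dist_add_one_of_adj 1 (E.adj_mul ha w) with h | h
  · right
    rw [sgn, h]; push_cast; ring
  · left
    rw [sgn, h]; push_cast; ring

lemma abs_sgn (E : ERW G d p Ω P) {a : G} (ha : a ∈ E.S) (w : G) : |E.sgn a w| = 1 := by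
  rcases E.sgn_cases ha w with h | h <;> simp [h]

lemma sgn_one (E : ERW G d p Ω P) {a : G} (ha : a ∈ E.S) : E.sgn a 1 = 1 := by
  rcases E.sgn_cases ha 1 with h | h
  · exact h
  · rw [sgn, SimpleGraph.dist_self] at h
    have : (0 : ℝ) ≤ ((cayleyGraph E.S).dist 1 (a * 1) : ℝ) := by positivity
    push_cast at h
    linarith

lemma exists_unique_down (E : ERW G d p Ω P) {w : G} (hw : w ≠ 1) :
    ∃ b ∈ E.S, E.sgn b w = -1 ∧ ∀ a ∈ E.S, a ≠ b → E.sgn a w = 1 := by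
  obtain ⟨q, hq⟩ := E.tree.connected.exists_walk_length_eq_dist w 1
  have hqp := q.isPath_of_length_eq_dist hq
  cases q with
  | nil => exact absurd rfl hw
  | @cons _ v _ hadj q =>
    have hb : v * w⁻¹ ∈ E.S := by
      rcases hadj.2 with h | h
      · exact h
      · have := E.symm_S _ h
        simpa using this
    have key : ∀ a ∈ E.S, E.sgn a w = -1 → a = v * w⁻¹ := by
      intro a ha hs
      obtain ⟨r, hr⟩ := E.tree.connected.exists_walk_length_eq_dist (a * w) 1
      have hlen : (SimpleGraph.Walk.cons (E.adj_mul ha w) r).length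
          = (cayleyGraph E.S).dist w 1 := by
        rw [SimpleGraph.Walk.length_cons, hr, SimpleGraph.dist_comm (u := w),
          SimpleGraph.dist_comm (u := a * w)]
        rw [sgn] at hs
        have : (((cayleyGraph E.S).dist 1 (a * w) + 1 : ℕ) : ℝ)
            = ((cayleyGraph E.S).dist 1 w : ℝ) := by push_cast; linarith
        exact_mod_cast this
      have hp2 := SimpleGraph.Walk.isPath_of_length_eq_dist _ hlen
      have := E.tree.isAcyclic.path_unique ⟨_, hp2⟩ ⟨_, hqp⟩
      have h2 := congrArg Subtype.val this
      simp only [SimpleGraph.Walk.cons.injEq] at h2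
      rw [← h2.1]; simp
    refine ⟨v * w⁻¹, hb, ?_, fun a ha hne => ?_⟩
    · have h1 : (cayleyGraph E.S).dist 1 v + 1 ≤ (cayleyGraph E.S).dist 1 w := by
        have := SimpleGraph.dist_le q
        rw [SimpleGraph.Walk.length_cons] at hq
        rw [SimpleGraph.dist_comm, SimpleGraph.dist_comm (v := w)]
        omega
      rcases E.sgn_cases hb w with h | h
      · exfalso
        rw [sgn] at h
        simp only [inv_mul_cancel_right] at h
        have : (((cayleyGraph E.S).dist 1 v + 1 : ℕ) : ℝ)
            ≤ ((cayleyGraph E.S).dist 1 w : ℝ) := by exact_mod_cast h1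
        push_cast at this
        linarith
      · exact h
    · rcases E.sgn_cases ha w with h | h
      · exact h
      · exact absurd (key a ha h) hne

lemma sum_sgn (E : ERW G d p Ω P) (w : G) :
    ∑ a ∈ E.S, E.sgn a w = if w = 1 then (d : ℝ) else (d : ℝ) - 2 := by
  split_ifs with h
  · subst h
    rw [Finset.sum_congr rfl fun a ha => E.sgn_one ha]
    simp [E.card_S]
  · obtain ⟨b, hb, h1, h2⟩ := E.exists_unique_down h
    rw [← Finset.add_sum_erase _ _ hb, h1,
      Finset.sum_congr rfl fun a ha => h2 a (Finset.mem_of_mem_erase ha) (Finset.ne_of_mem_erase ha)]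
    have : 1 ≤ E.S.card := Finset.card_pos.2 ⟨b, hb⟩
    rw [Finset.sum_const, Finset.card_erase_of_mem hb, nsmul_eq_mul, Nat.cast_sub this, E.card_S]
    push_cast; ring

lemma dist_succ_sub (E : ERW G d p Ω P) (n : ℕ) (ω : Ω) :
    (E.dist (n + 1) ω : ℝ) - E.dist n ω = E.sgn (E.g (n + 1) ω) (E.pos n ω) := rfl

lemma dist_zero (E : ERW G d p Ω P) (ω : Ω) : E.dist 0 ω = 0 := by
  simp [dist, pos]

/-- histories up to time `n` agree -/
def agree (E : ERW G d p Ω P) (n : ℕ) (ω ω' : Ω) : Prop :=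
  ∀ k ∈ Finset.Icc 1 n, E.g k ω' = E.g k ω

lemma pos_agree (E : ERW G d p Ω P) (n : ℕ) {ω ω' : Ω} (h : E.agree n ω ω') :
    E.pos n ω' = E.pos n ω := by
  induction n with
  | zero => rfl
  | succ n ih =>
    have h1 := ih fun k hk => h k (by simp at hk ⊢; omega)
    have h2 := h (n + 1) (by simp)
    simp only [pos, h1, h2]

lemma filt_mono (E : ERW G d p Ω P) : Monotone E.filt := by
  intro m n hmn
  refine iSup₂_le fun k hk => ?_
  exact le_iSup₂_of_le (f := fun k (_ : k ∈ Finset.Icc 1 n) => MeasurableSpace.comap (E.g k) ⊤) k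
    (by simp at hk ⊢; omega) le_rfl

lemma filt_le (E : ERW G d p Ω P) (n : ℕ) : E.filt n ≤ (inferInstance : MeasurableSpace Ω) := by
  refine iSup₂_le fun k hk => ?_
  rintro _ ⟨B, -, rfl⟩
  have : E.g k ⁻¹' B = ⋃ a ∈ (E.S : Set G) ∩ B, {ω | E.g k ω = a} := by
    ext ω
    have := E.mem_S k (Finset.mem_Icc.1 hk).1 ω
    simp [this]
  rw [this]
  exact MeasurableSet.biUnion (E.S.finite_toSet.inter_of_left B).countable fun a _ => E.meas_g k a

/-- the history map into a finite type -/
def hist (E : ERW G d p Ω P) (n : ℕ) (ω : Ω) : Finset.Icc 1 n → E.S :=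
  fun k => ⟨E.g k ω, E.mem_S k (Finset.mem_Icc.1 k.2).1 ω⟩

lemma hist_eq_iff (E : ERW G d p Ω P) (n : ℕ) (ω ω' : Ω) :
    E.hist n ω' = E.hist n ω ↔ E.agree n ω ω' := by
  simp only [funext_iff, hist, Subtype.mk.injEq, agree, Subtype.forall]

lemma meas_cyl (E : ERW G d p Ω P) (n : ℕ) (ω : Ω) :
    MeasurableSet[E.filt n] {ω' | E.agree n ω ω'} := by
  have : {ω' | E.agree n ω ω'} = ⋂ k ∈ Finset.Icc 1 n, E.g k ⁻¹' {E.g k ω} := by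
    ext ω'; simp [agree]
  rw [this]
  refine Finset.measurableSet_biInter _ fun k hk => ?_
  exact le_iSup₂ (f := fun k (_ : k ∈ Finset.Icc 1 n) => MeasurableSpace.comap (E.g k) ⊤) k hk _
    ⟨{E.g k ω}, trivial, rfl⟩

lemma saturated (E : ERW G d p Ω P) (n : ℕ) {s : Set Ω} (hs : MeasurableSet[E.filt n] s)
    {ω ω' : Ω} (h : E.agree n ω ω') (hω : ω ∈ s) : ω' ∈ s := by
  have hle : E.filt n ≤ MeasurableSpace.comap (fun ω (k : Finset.Icc 1 n) => E.g k ω) ⊤ := by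
    refine iSup₂_le fun k hk => ?_
    rintro _ ⟨B, -, rfl⟩
    exact ⟨{f | f ⟨k, hk⟩ ∈ B}, trivial, rfl⟩
  obtain ⟨B, -, rfl⟩ := hle _ hs
  have : (fun (k : Finset.Icc 1 n) => E.g k ω') = (fun (k : Finset.Icc 1 n) => E.g k ω) := by
    funext k; exact h k k.2
  simp only [Set.mem_preimage] at hω ⊢
  rw [this]; exact hω

lemma inter_fiber (E : ERW G d p Ω P) (n : ℕ) {s : Set Ω}
    (hs : ∀ ω ω', E.agree n ω ω' → ω ∈ s → ω' ∈ s) (x : Finset.Icc 1 n → E.S) :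
    s ∩ E.hist n ⁻¹' {x} = ∅ ∨ ∃ ω, s ∩ E.hist n ⁻¹' {x} = {ω' | E.agree n ω ω'} := by
  rcases (s ∩ E.hist n ⁻¹' {x}).eq_empty_or_nonempty with h | ⟨ω, h1, h2⟩
  · exact Or.inl h
  · refine Or.inr ⟨ω, ?_⟩
    rw [Set.mem_preimage, Set.mem_singleton_iff] at h2
    ext ω'
    simp only [Set.mem_inter_iff, Set.mem_preimage, Set.mem_singleton_iff, Set.mem_setOf_eq]
    rw [← h2, hist_eq_iff]
    exact ⟨fun h => h.2, fun h => ⟨hs _ _ h h1, h⟩⟩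

lemma iUnion_fiber (E : ERW G d p Ω P) (n : ℕ) (s : Set Ω) :
    s = ⋃ x, s ∩ E.hist n ⁻¹' {x} := by
  ext ω; simp

lemma meas_of_saturated (E : ERW G d p Ω P) (n : ℕ) {s : Set Ω}
    (hs : ∀ ω ω', E.agree n ω ω' → ω ∈ s → ω' ∈ s) : MeasurableSet[E.filt n] s := by
  rw [E.iUnion_fiber n s]
  refine MeasurableSet.iUnion fun x => ?_
  rcases E.inter_fiber n hs x with h | ⟨ω, h⟩
  · rw [h]; exact @MeasurableSet.empty _ (E.filt n)
  · rw [h]; exact E.meas_cyl n ω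

lemma sm_of_agree (E : ERW G d p Ω P) (n : ℕ) {f : Ω → ℝ}
    (hf : ∀ ω ω', E.agree n ω ω' → f ω' = f ω) : StronglyMeasurable[E.filt n] f := by
  refine Measurable.stronglyMeasurable (fun B _ => ?_)
  refine E.meas_of_saturated n fun ω ω' h hω => ?_
  rw [Set.mem_preimage] at hω ⊢
  rwa [hf ω ω' h]

lemma count_agree (E : ERW G d p Ω P) (a : G) (n : ℕ) {ω ω' : Ω} (h : E.agree n ω ω') :
    E.count a n ω' = E.count a n ω := by
  unfold count
  congr 1
  refine Finset.filter_congr fun k hk => ?_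
  rw [h k hk]

/-- indicator that the `(k+1)`-st step is `a` -/
def ind (E : ERW G d p Ω P) (a : G) (k : ℕ) (ω : Ω) : ℝ :=
  if E.g (k + 1) ω = a then 1 else 0

lemma ind_sm (E : ERW G d p Ω P) (a : G) (k : ℕ) :
    StronglyMeasurable[E.filt (k + 1)] (E.ind a k) := by
  refine E.sm_of_agree _ fun ω ω' h => ?_
  rw [ind, ind, h (k + 1) (by simp)]

lemma ind_bdd (E : ERW G d p Ω P) (a : G) (k : ℕ) (ω : Ω) : |E.ind a k ω| ≤ 1 := by
  rw [ind]; split_ifs <;> simp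

lemma sum_ind (E : ERW G d p Ω P) (a : G) (n : ℕ) (ω : Ω) :
    ∑ k ∈ Finset.range n, E.ind a k ω = E.count a n ω := by
  rw [count, Finset.card_filter]
  push_cast
  induction n with
  | zero => simp
  | succ n ih =>
    rw [Finset.sum_range_succ, ih, Finset.sum_Icc_succ_top (by omega)]
    simp [ind]

/-- explicit conditional probability of the step `a` -/
def q (E : ERW G d p Ω P) (a : G) (n : ℕ) (ω : Ω) : ℝ :=
  p * ((E.count a n ω : ℝ) / n)
    + (1 - p) / ((d : ℝ) - 1) * (((n : ℝ) - (E.count a n ω : ℝ)) / n)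

variable [IsProbabilityMeasure P]

lemma integrable_of (E : ERW G d p Ω P) (n : ℕ) {f : Ω → ℝ} (hf : StronglyMeasurable[E.filt n] f)
    (C : ℝ) (hC : ∀ ω, |f ω| ≤ C) : Integrable f P :=
  Integrable.of_bound (hf.mono (E.filt_le n)).aestronglyMeasurable C
    (Eventually.of_forall fun ω => hC ω)

lemma count_le (E : ERW G d p Ω P) (a : G) (n : ℕ) (ω : Ω) : E.count a n ω ≤ n := by
  refine (Finset.card_filter_le _ _).trans ?_
  simp

lemma q_integrable (E : ERW G d p Ω P) (a : G) (n : ℕ) : Integrable (E.q a n) P := by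
  refine E.integrable_of n (E.sm_of_agree n fun ω ω' h => ?_)
    (|p| + |(1 - p) / ((d : ℝ) - 1)|) fun ω => ?_
  · rw [q, q, E.count_agree a n h]
  · have h1 : (E.count a n ω : ℝ) ≤ n := by exact_mod_cast E.count_le a n ω
    have h0 : (0 : ℝ) ≤ E.count a n ω := by positivity
    rw [q]
    refine (abs_add_le _ _).trans ?_
    rw [abs_mul, abs_mul]
    gcongr
    · refine mul_le_of_le_one_right (abs_nonneg _) ?_
      rw [abs_of_nonneg (by positivity)]
      exact div_le_one_of_le₀ h1 (by positivity)
    · refine mul_le_of_le_one_right (abs_nonneg _) ?_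
      rw [abs_of_nonneg (div_nonneg (by linarith) (by positivity))]
      exact div_le_one_of_le₀ (by linarith) (by positivity)

lemma condExp_ind (E : ERW G d p Ω P) {a : G} (ha : a ∈ E.S) {n : ℕ} (hn : 1 ≤ n) :
    E.q a n =ᵐ[P] P[E.ind a n | E.filt n] := by
  have hi : Integrable (E.ind a n) P := E.integrable_of (n + 1) (E.ind_sm a n) 1 (E.ind_bdd a n)
  refine ae_eq_condExp_of_forall_setIntegral_eq (E.filt_le n) hi
    (fun s _ _ => (E.q_integrable a n).integrableOn) ?_
    (E.sm_of_agree n fun ω ω' h => by rw [q, q, E.count_agree a n h]).aestronglyMeasurable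
  intro s hs _
  have hsat : ∀ ω ω', E.agree n ω ω' → ω ∈ s → ω' ∈ s := fun ω ω' h => E.saturated n hs h
  have hms : ∀ x, MeasurableSet (s ∩ E.hist n ⁻¹' {x}) := by
    intro x
    rcases E.inter_fiber n hsat x with h | ⟨ω, h⟩
    · rw [h]; exact MeasurableSet.empty
    · rw [h]; exact E.filt_le n _ (E.meas_cyl n ω)
  have hdisj : Pairwise (Function.onFun Disjoint fun x => s ∩ E.hist n ⁻¹' {x}) := by
    intro x y hxy
    refine Set.disjoint_left.2 fun ω h1 h2 => hxy ?_
    exact h1.2.symm.trans h2.2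
  rw [E.iUnion_fiber n s, integral_iUnion_fintype hms hdisj
      (fun _ => (E.q_integrable a n).integrableOn),
    integral_iUnion_fintype hms hdisj (fun _ => hi.integrableOn)]
  refine Finset.sum_congr rfl fun x _ => ?_
  rcases E.inter_fiber n hsat x with h | ⟨ω, h⟩
  · simp [h]
  rw [h]
  have hmc : MeasurableSet {ω' | E.agree n ω ω'} := E.filt_le n _ (E.meas_cyl n ω)
  have e1 : ∫ ω' in {ω' | E.agree n ω ω'}, E.q a n ω' ∂P
      = ∫ ω' in {ω' | E.agree n ω ω'}, E.q a n ω ∂P := by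
    refine setIntegral_congr_fun hmc fun ω' h' => ?_
    simp only [q, E.count_agree a n h']
  have e2 : E.ind a n = Set.indicator {ω | E.g (n + 1) ω = a} (fun _ => (1 : ℝ)) := by
    ext ω'
    simp [ind, Set.indicator_apply]
  have hu := E.update n hn (fun k => E.g k ω) a ha
  rw [e1, e2, setIntegral_indicator (E.meas_g (n + 1) a)]
  simp only [setIntegral_const, smul_eq_mul, mul_one]
  rw [mul_comm]
  exact hu.symm

lemma drift_eq (E : ERW G d p Ω P) (n : ℕ) :
    E.drift n =ᵐ[P] fun ω => ∑ a ∈ E.S, E.sgn a (E.pos n ω) * (P[E.ind a n | E.filt n]) ω := by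
  have hs : ∀ a, StronglyMeasurable[E.filt n] (fun ω => E.sgn a (E.pos n ω)) := fun a =>
    E.sm_of_agree n fun ω ω' h => by rw [E.pos_agree n h]
  have hi : ∀ a, Integrable (E.ind a n) P := fun a =>
    E.integrable_of (n + 1) (E.ind_sm a n) 1 (E.ind_bdd a n)
  have hsi : ∀ a ∈ E.S, Integrable ((fun ω => E.sgn a (E.pos n ω)) * E.ind a n) P := fun a ha =>
    (hi a).bdd_mul ((hs a).mono (E.filt_le n)).aestronglyMeasurable (c := 1)
      (Eventually.of_forall fun ω => by rw [Real.norm_eq_abs, E.abs_sgn ha])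
  have e : (fun ω => ((E.dist (n + 1) ω : ℝ) - (E.dist n ω : ℝ)))
      = ∑ a ∈ E.S, ((fun ω => E.sgn a (E.pos n ω)) * E.ind a n) := by
    ext ω
    rw [E.dist_succ_sub, Finset.sum_apply]
    simp [ind, E.mem_S (n + 1) (by omega) ω]
  rw [drift, e]
  have h1 := condExp_finsetSum (μ := P) hsi (E.filt n)
  have h2 : ∀ᵐ ω ∂P, ∀ a ∈ E.S, (P[(fun ω => E.sgn a (E.pos n ω)) * E.ind a n | E.filt n]) ω
      = E.sgn a (E.pos n ω) * (P[E.ind a n | E.filt n]) ω := by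
    refine (ae_ball_iff E.S.countable_toSet).2 fun a ha => ?_
    exact condExp_mul_of_stronglyMeasurable_left (hs a) (hsi a ha) (hi a)
  filter_upwards [h1, h2] with ω h3 h4
  rw [h3, Finset.sum_apply]
  exact Finset.sum_congr rfl h4

lemma incr_sm (E : ERW G d p Ω P) (n : ℕ) : StronglyMeasurable[E.filt (n + 1)]
    (fun ω => ((E.dist (n + 1) ω : ℝ) - (E.dist n ω : ℝ))) := by
  refine E.sm_of_agree _ fun ω ω' h => ?_
  have h' : E.agree n ω ω' := fun k hk => h k (by simp at hk ⊢; omega)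
  simp only [dist, E.pos_agree _ h, E.pos_agree _ h']

lemma incr_abs (E : ERW G d p Ω P) (n : ℕ) (ω : Ω) :
    |(E.dist (n + 1) ω : ℝ) - (E.dist n ω : ℝ)| = 1 := by
  rw [E.dist_succ_sub]
  exact E.abs_sgn (E.mem_S _ (by omega) ω) _

lemma condExp_sq (E : ERW G d p Ω P) (n : ℕ) :
    P[fun ω' => (E.mdiff (n + 1) ω') ^ 2 | E.filt n] =ᵐ[P] fun ω => 1 - (E.drift n ω) ^ 2 := by
  set D : Ω → ℝ := fun ω => ((E.dist (n + 1) ω : ℝ) - (E.dist n ω : ℝ)) with hD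
  have hDi : Integrable D P :=
    E.integrable_of (n + 1) (E.incr_sm n) 1 fun ω => (E.incr_abs n ω).le
  have hds : StronglyMeasurable[E.filt n] (E.drift n) := stronglyMeasurable_condExp
  have hdb : ∀ᵐ ω ∂P, |E.drift n ω| ≤ 1 :=
    ae_bdd_abs_condExp_of_ae_bdd_abs (m := E.filt n) (μ := P) (R := 1) (f := D)
      (Eventually.of_forall fun ω => (E.incr_abs n ω).le)
  set f : Ω → ℝ := fun ω => -2 * E.drift n ω with hf
  set h : Ω → ℝ := fun ω => 1 + (E.drift n ω) ^ 2 with hh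
  have hfs : StronglyMeasurable[E.filt n] f := hds.const_mul (-2)
  have hhs : StronglyMeasurable[E.filt n] h := (hds.pow 2).const_add 1
  have hfD : Integrable (f * D) P := by
    refine hDi.bdd_mul (hfs.mono (E.filt_le n)).aestronglyMeasurable (c := 2) ?_
    filter_upwards [hdb] with ω hω
    rw [hf, Real.norm_eq_abs, abs_mul]
    norm_num
    linarith
  have hhi : Integrable h P := by
    refine Integrable.of_bound (hhs.mono (E.filt_le n)).aestronglyMeasurable 2 ?_
    filter_upwards [hdb] with ω hω
    rw [Real.norm_eq_abs, abs_of_nonneg (by positivity)]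
    rw [← sq_le_one_iff_abs_le_one] at hω
    simp only [hh]
    linarith
  have e : (fun ω' => (E.mdiff (n + 1) ω') ^ 2) = f * D + h := by
    ext ω
    have h1 : (D ω) ^ 2 = 1 := by
      rw [← sq_abs, hD]; simp only; rw [E.incr_abs]; norm_num
    have h2 : E.mdiff (n + 1) ω = D ω - E.drift n ω := rfl
    rw [h2]
    simp only [Pi.add_apply, Pi.mul_apply, hf, hh]
    linear_combination h1
  rw [e]
  have h1 := condExp_add hfD hhi (E.filt n)
  have h2 := condExp_mul_of_stronglyMeasurable_left hfs hfD hDi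
  have h3 : P[h | E.filt n] = h := condExp_of_stronglyMeasurable (E.filt_le n) hhs hhi
  filter_upwards [h1, h2] with ω h4 h5
  have h6 : (P[D | E.filt n]) ω = E.drift n ω := rfl
  rw [h4, Pi.add_apply, h5, h3, Pi.mul_apply, h6]
  simp only [hf, hh]
  ring

lemma sum_condExp_sq (E : ERW G d p Ω P) : ∀ᵐ ω ∂P, ∀ n : ℕ,
    ∑ k ∈ Finset.Icc 1 n, (P[fun ω' => (E.mdiff k ω') ^ 2 | E.filt (k - 1)]) ω
        = (n : ℝ) - ∑ k ∈ Finset.range n, (E.drift k ω) ^ 2 := by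
  filter_upwards [ae_all_iff.2 fun n => E.condExp_sq n] with ω h n
  induction n with
  | zero => simp
  | succ n ih =>
    rw [Finset.sum_Icc_succ_top (by omega), ih, Finset.sum_range_succ]
    have := h n
    simp only [Nat.add_sub_cancel]
    rw [this]
    push_cast; ring

lemma ae_count (E : ERW G d p Ω P) (hd : 3 ≤ d) (hp0 : 0 ≤ p) (hp1 : p < 1) :
    ∀ᵐ ω ∂P, ∀ a ∈ E.S, Tendsto (fun n => (P[E.ind a n | E.filt n]) ω) atTop
      (nhds (1 / (d : ℝ))) := by
  refine (ae_ball_iff E.S.countable_toSet).2 fun a ha => ?_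
  have h1 := slln_mart (P := P) E.filt E.filt_le E.filt_mono (E.ind a) (E.ind_sm a) (E.ind_bdd a)
  have h2 : ∀ᵐ ω ∂P, ∀ n, 1 ≤ n → E.q a n ω = (P[E.ind a n | E.filt n]) ω := by
    rw [ae_all_iff]; intro n
    by_cases hn : 1 ≤ n
    · filter_upwards [E.condExp_ind ha hn] with ω h _ using h
    · exact Eventually.of_forall fun ω h => absurd h hn
  filter_upwards [h1, h2] with ω h3 h4
  have hdR : (3 : ℝ) ≤ d := by exact_mod_cast hd
  have hd1 : (0 : ℝ) < (d : ℝ) - 1 := by linarith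
  have hd0 : (0 : ℝ) < d := by linarith
  set α : ℝ := (p * d - 1) / ((d : ℝ) - 1) with hα
  have hq : ∀ n, 1 ≤ n → (P[E.ind a n | E.filt n]) ω - 1 / (d : ℝ)
      = α * ((E.count a n ω : ℝ) / n - 1 / d) := by
    intro n hn
    have hnR : (0 : ℝ) < n := by exact_mod_cast hn
    rw [← h4 n hn, q, hα]
    field_simp
    ring
  have hα1 : |α| < 1 := by
    rw [hα, abs_lt, lt_div_iff₀ hd1, div_lt_one hd1]
    constructor
    · nlinarith
    · nlinarith
  have h5 : Tendsto (fun n : ℕ => (E.count a n ω : ℝ) / n) atTop (nhds (1 / (d : ℝ))) := by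
    refine urn_tendsto (fun n => (E.count a n ω : ℝ)) (fun n => (P[E.ind a n | E.filt n]) ω)
      α (1 / d) hα1 (fun n => ⟨by positivity, by exact_mod_cast E.count_le a n ω⟩) hq ?_
    refine h3.congr fun n => ?_
    rw [Finset.sum_sub_distrib, E.sum_ind]
  have h6 : Tendsto (fun n : ℕ => α * ((E.count a n ω : ℝ) / n - 1 / d) + 1 / (d : ℝ)) atTop
      (nhds (1 / (d : ℝ))) := by
    have := ((h5.sub_const (1 / (d : ℝ))).const_mul α).add_const (1 / (d : ℝ))
    simpa using this
  refine h6.congr' ?_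
  filter_upwards [eventually_ge_atTop 1] with n hn
  rw [← hq n hn]; ring

lemma ae_drift (E : ERW G d p Ω P) (hd : 3 ≤ d) (hp0 : 0 ≤ p) (hp1 : p < 1) :
    ∀ᵐ ω ∂P, Tendsto (fun n => E.drift n ω) atTop (nhds (1 - 2 / (d : ℝ))) := by
  have h1 := slln_mart (P := P) E.filt E.filt_le E.filt_mono
    (fun n ω => ((E.dist (n + 1) ω : ℝ) - (E.dist n ω : ℝ))) E.incr_sm
    (fun n ω => (E.incr_abs n ω).le)
  filter_upwards [h1, E.ae_count hd hp0 hp1, ae_all_iff.2 fun n => E.drift_eq n]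
    with ω hM hcount hdr
  have hdR : (3 : ℝ) ≤ d := by exact_mod_cast hd
  have hd0 : (0 : ℝ) < d := by linarith
  set b : ℕ → ℝ := fun n => if E.pos n ω = 1 then 1 else 1 - 2 / (d : ℝ) with hb
  have hbs : ∀ n, b n = ∑ a ∈ E.S, E.sgn a (E.pos n ω) * (1 / (d : ℝ)) := by
    intro n
    rw [← Finset.sum_mul, E.sum_sgn, hb]
    simp only
    split_ifs <;> field_simp
  have hdiff : Tendsto (fun n => E.drift n ω - b n) atTop (nhds 0) := by
    have ht : Tendsto (fun n => ∑ a ∈ E.S, |(P[E.ind a n | E.filt n]) ω - 1 / (d : ℝ)|)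
        atTop (nhds 0) := by
      have : Tendsto (fun n => ∑ a ∈ E.S, |(P[E.ind a n | E.filt n]) ω - 1 / (d : ℝ)|)
          atTop (nhds (∑ a ∈ E.S, 0)) := by
        refine tendsto_finset_sum _ fun a ha => ?_
        have := ((hcount a ha).sub_const (1 / (d : ℝ))).abs
        simpa using this
      simpa using this
    refine squeeze_zero_norm (fun n => ?_) ht
    rw [hdr n, hbs n, ← Finset.sum_sub_distrib, Real.norm_eq_abs]
    refine (Finset.abs_sum_le_sum_abs _ _).trans (Finset.sum_le_sum fun a ha => ?_)
    rw [← mul_sub, abs_mul, E.abs_sgn ha, one_mul]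
  have hces := hdiff.cesaro
  have hsum : Tendsto (fun n : ℕ => (E.dist n ω : ℝ) / n - (∑ k ∈ Finset.range n, b k) / n)
      atTop (nhds 0) := by
    have := hM.add hces
    rw [add_zero] at this
    refine this.congr fun n => ?_
    have e : ∑ k ∈ Finset.range n, ((E.dist (k + 1) ω : ℝ) - (E.dist k ω : ℝ)) = E.dist n ω := by
      rw [Finset.sum_range_sub (fun k => (E.dist k ω : ℝ)), E.dist_zero]; simp
    rw [Finset.sum_sub_distrib, e, Finset.sum_sub_distrib]
    change ((E.dist n ω : ℝ) - ∑ k ∈ Finset.range n, E.drift k ω) / n + _ = _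
    ring
  have hev : ∀ᶠ n in atTop, E.pos n ω ≠ 1 := by
    filter_upwards [hsum.eventually (lt_mem_nhds (show (-(1 / 3) : ℝ) < 0 by norm_num)),
      eventually_ge_atTop 1] with n hn hn1 h1
    have h0 : (E.dist n ω : ℝ) = 0 := by simp [dist, h1]
    have hnR : (0 : ℝ) < n := by exact_mod_cast hn1
    have hbl : ∀ k, (1 / 3 : ℝ) ≤ b k := by
      intro k
      have : 2 / (d : ℝ) ≤ 2 / 3 := by gcongr
      rw [hb]; simp only
      split_ifs <;> linarith
    have h2 : (n : ℝ) * (1 / 3) ≤ ∑ k ∈ Finset.range n, b k := by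
      have := Finset.card_nsmul_le_sum (Finset.range n) b (1 / 3) fun k _ => hbl k
      simpa using this
    have h3 : (1 / 3 : ℝ) ≤ (∑ k ∈ Finset.range n, b k) / n := by
      rw [le_div_iff₀ hnR]; linarith
    rw [h0, zero_div] at hn
    linarith
  have hbt : Tendsto b atTop (nhds (1 - 2 / (d : ℝ))) := by
    refine tendsto_const_nhds.congr' ?_
    filter_upwards [hev] with n hn
    simp [hb, hn]
  have := hdiff.add hbt
  simpa using this

end treefacts

end ERW

/-- the predictable quadratic variation
`⟨M⟩ n = ∑_{k=1}^n E[Y k ^ 2 | F (k-1)]` of the martingale `M n = ∑_{k=1}^n Y k`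
(with `Y k = Δ k - Δ (k-1) - G (k-1)` and `G k = E[Δ (k+1) - Δ k | F k]`) equals
`n - ∑_{k=0}^{n-1} (G k)^2` (a.s.), and `⟨M⟩ n / n → 4(d-1)/d²` almost surely. -/
theorem erw_quadratic_variation
    {G : Type*} [Group G] [DecidableEq G] {Ω : Type*} [MeasurableSpace Ω]
    {P : Measure Ω} [IsProbabilityMeasure P]
    (d : ℕ) (hd : 3 ≤ d) (p : ℝ) (hp0 : 0 ≤ p) (hp1 : p < 1)
    (E : ERW G d p Ω P) :
    (∀ n : ℕ, 1 ≤ n → ∀ᵐ ω ∂P,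
      ∑ k ∈ Finset.Icc 1 n,
          (P[fun ω' => (E.mdiff k ω') ^ 2 | E.filt (k - 1)]) ω
        = (n : ℝ) - ∑ k ∈ Finset.range n, (E.drift k ω) ^ 2) ∧
    ∀ᵐ ω ∂P,
      Tendsto (fun n : ℕ =>
          (∑ k ∈ Finset.Icc 1 n,
            (P[fun ω' => (E.mdiff k ω') ^ 2 | E.filt (k - 1)]) ω) / n)
        atTop (nhds (4 * ((d : ℝ) - 1) / (d : ℝ) ^ 2)) := by
  have hsum := E.sum_condExp_sq
  refine ⟨fun n _ => ?_, ?_⟩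
  · filter_upwards [hsum] with ω h using h n
  · filter_upwards [hsum, E.ae_drift hd hp0 hp1] with ω h hdr
    have hdR : (3 : ℝ) ≤ d := by exact_mod_cast hd
    have hd0 : (d : ℝ) ≠ 0 := by linarith
    have h1 := (hdr.pow 2).cesaro.const_sub 1
    have e : (1 : ℝ) - (1 - 2 / (d : ℝ)) ^ 2 = 4 * ((d : ℝ) - 1) / (d : ℝ) ^ 2 := by
      field_simp; ring
    rw [e] at h1
    refine h1.congr' ?_
    filter_upwards [eventually_ge_atTop 1] with n hn
    have hnR : (n : ℝ) ≠ 0 := by positivity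
    rw [h n]
    field_simp

end
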